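/- (Integral form of the Space Conservation Law: rate of change of the volume of a moving control volume.) Let d ≥ 1, let φ : ℝᵈ × ℝ → ℝᵈ be twice continuously differentiable (ContDiff ℝ 2), write ŵ(x̂,t) = ∂φ/∂t(x̂,t) and J(x̂,t) = det Dφ_t(x̂). Let K̂ ⊆ ℝᵈ be compact and measurable, and assume that for every t ∈ ℝ the map x̂ ↦ φ(x̂,t) is injective on K̂ and J(x̂,t) > 0 for all x̂ ∈ K̂. Then for every t₀ ∈ ℝ, the function t ↦ (Lebesgue measure of the image φ_t(K̂)).toReal is differentiable at t₀ with derivative ∫_{K̂} div( x̂ ↦ adjugate(Dφ_{t₀}(x̂)) · ŵ(x̂,t₀) )(x̂) dx̂. -/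

import Mathlib

/-!
By the change of variables formula and `J > 0`, the volume of `φ_t(K̂)` is `∫_{K̂} J(x̂, t) dx̂`
(`volume_image_eq`). The integrand is jointly `C¹` and `K̂` is compact, so one may differentiate
under the integral sign, and it remains to show the pointwise identity
`∂J/∂t = div (adjugate (Dφ_t) ŵ)`.

Jacobi's formula gives `∂J/∂t = ∑ₖₗ (adjugate Dφ_t)ₗₖ ∂ₗŵₖ` (`hasDerivAt_jacobian`). The product
rule gives the same expression for the divergence (`vdiv_adjugate`), plus terms that vanish
because the columns of `adjugate (Dφ_t)` are divergence free (the Piola identity). The latter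
holds since each such divergence is a contraction of the symmetric second derivatives of `φ`
with determinants that are antisymmetric in two rows (`sum_det_updateRow_symm_eq_zero`).
-/

open Matrix MeasureTheory

/-- The Jacobian matrix (in the standard basis) of a map `f : ℝᵈ → ℝᵈ` at `x`. -/
noncomputable def Dmat {d : ℕ} (f : (Fin d → ℝ) → (Fin d → ℝ)) (x : Fin d → ℝ) :
    Matrix (Fin d) (Fin d) ℝ :=
  Matrix.of fun i j => fderiv ℝ f x (Pi.single j 1) i

/-- The divergence of a vector field `g : ℝᵈ → ℝᵈ` at `x`. -/
noncomputable def vdiv {d : ℕ} (g : (Fin d → ℝ) → (Fin d → ℝ)) (x : Fin d → ℝ) : ℝ :=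
  ∑ i, fderiv ℝ g x (Pi.single i 1) i

/-- The determinant as a continuous multilinear function of the rows of a matrix. -/
noncomputable def detRows (d : ℕ) :
    ContinuousMultilinearMap ℝ (fun _ : Fin d => Fin d → ℝ) ℝ where
  toMultilinearMap := (Matrix.detRowAlternating (R := ℝ) (n := Fin d)).toMultilinearMap
  cont := by
    have h : Continuous fun M : Matrix (Fin d) (Fin d) ℝ => M.det :=
      Continuous.matrix_det continuous_id
    exact h

theorem hasDerivAt_det {d : ℕ} {M : ℝ → Matrix (Fin d) (Fin d) ℝ}
    {M' : Matrix (Fin d) (Fin d) ℝ} {s : ℝ}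
    (h : ∀ i j, HasDerivAt (fun r => M r i j) (M' i j) s) :
    HasDerivAt (fun r => (M r).det) (∑ k, ((M s).updateRow k (M' k)).det) s := by
  have h1 : HasDerivAt (fun r => (fun i j => M r i j : Fin d → Fin d → ℝ))
      (fun i j => M' i j) s := by
    rw [hasDerivAt_pi]; intro i; rw [hasDerivAt_pi]; exact h i
  have h2 := ((detRows d).hasFDerivAt (fun i j => M s i j)).comp_hasDerivAt s h1
  rw [ContinuousMultilinearMap.linearDeriv_apply] at h2
  exact h2

theorem det_updateRow_eq_sum {d : ℕ} (B : Matrix (Fin d) (Fin d) ℝ) (k : Fin d)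
    (v : Fin d → ℝ) : (B.updateRow k v).det = ∑ l, v l * B.adjugate l k := by
  rw [← Matrix.cramer_transpose_apply, Matrix.cramer_eq_adjugate_mulVec,
    ← Matrix.adjugate_transpose]
  simp [Matrix.mulVec, dotProduct, mul_comm]

theorem det_updateRow_single_swap {d : ℕ} (A : Matrix (Fin d) (Fin d) ℝ) {j k : Fin d}
    (hjk : k ≠ j) (u v : Fin d → ℝ) :
    ((A.updateRow j u).updateRow k v).det = -((A.updateRow j v).updateRow k u).det := by
  have h : (A.updateRow j u).updateRow k v =
      ((A.updateRow j v).updateRow k u).submatrix (Equiv.swap j k) id := by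
    ext a b
    rcases eq_or_ne a k with rfl | hak
    · simp [Matrix.updateRow_ne, hjk.symm]
    · rcases eq_or_ne a j with rfl | haj
      · simp [Matrix.updateRow_ne, hjk.symm]
      · simp [Matrix.updateRow_ne, hak, haj, Equiv.swap_apply_of_ne_of_ne]
  rw [h, Matrix.det_permute, Equiv.Perm.sign_swap hjk.symm]
  simp

/-- The algebraic core of the Piola identity. With `H k i l = ∂ᵢ∂ₗφₖ` and `A = Dφ`, the inner
sum over `k` is `∂ᵢ` of the `(i, j)` entry of `adjugate A`; each `k` contributes the
contraction of the symmetric `H k` with a determinant antisymmetric in `i` and `l`. -/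
theorem sum_det_updateRow_symm_eq_zero {d : ℕ} (A : Matrix (Fin d) (Fin d) ℝ)
    (H : Fin d → Fin d → Fin d → ℝ) (hH : ∀ k i l, H k i l = H k l i) (j : Fin d) :
    ∑ i, ∑ k, ((A.updateRow j (Pi.single i 1)).updateRow k
      ((Matrix.of fun k => H k i).updateRow j 0 k)).det = 0 := by
  rw [Finset.sum_comm]
  refine Finset.sum_eq_zero fun k _ => ?_
  rcases eq_or_ne k j with rfl | hkj
  · refine Finset.sum_eq_zero fun i _ => Matrix.det_eq_zero_of_row_eq_zero k ?_
    simp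
  · have hrow (i : Fin d) : (Matrix.of fun k => H k i).updateRow j 0 k = H k i :=
      Matrix.updateRow_ne hkj
    simp only [hrow, det_updateRow_eq_sum _ k (H k _)]
    simp only [Matrix.adjugate_apply]
    have hS : ∀ S : ℝ, S = -S → S = 0 := fun S h => by linarith
    apply hS
    conv_lhs => rw [Finset.sum_comm]
    rw [← Finset.sum_neg_distrib]
    refine Finset.sum_congr rfl fun i _ => ?_
    rw [← Finset.sum_neg_distrib]
    refine Finset.sum_congr rfl fun l _ => ?_
    rw [det_updateRow_single_swap A hkj, hH k l i]
    ring

/-- The spatial Jacobian matrix `Dφ_t(x)` as a function of `(x, t)`, expressed through the total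
derivative of `φ` so that its smoothness in both variables jointly is visible. -/
noncomputable def spaceD {d : ℕ} (φ : (Fin d → ℝ) × ℝ → (Fin d → ℝ)) (p : (Fin d → ℝ) × ℝ) :
    Matrix (Fin d) (Fin d) ℝ :=
  Matrix.of fun i j => fderiv ℝ φ p (Pi.single j 1, 0) i

section

variable {d : ℕ} {φ : (Fin d → ℝ) × ℝ → (Fin d → ℝ)}

theorem hasFDerivAt_slice (hφ : ContDiff ℝ 2 φ) (x : Fin d → ℝ) (t : ℝ) :
    HasFDerivAt (fun y => φ (y, t))
      ((fderiv ℝ φ (x, t)).comp (ContinuousLinearMap.inl ℝ (Fin d → ℝ) ℝ)) x :=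
  ((hφ.differentiable (by norm_num)) (x, t)).hasFDerivAt.comp x (hasFDerivAt_prodMk_left x t)

theorem Dmat_eq_spaceD (hφ : ContDiff ℝ 2 φ) (x : Fin d → ℝ) (t : ℝ) :
    Dmat (fun y => φ (y, t)) x = spaceD φ (x, t) := by
  ext i j
  simp [Dmat, spaceD, (hasFDerivAt_slice hφ x t).fderiv]

theorem deriv_time_eq (hφ : ContDiff ℝ 2 φ) (x : Fin d → ℝ) (t : ℝ) :
    deriv (fun s => φ (x, s)) t = fderiv ℝ φ (x, t) (0, 1) :=
  (((hφ.differentiable (by norm_num)) (x, t)).hasFDerivAt.comp_hasDerivAt t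
    ((hasDerivAt_const t x).prodMk (hasDerivAt_id t))).deriv

theorem contDiff_fderiv_apply (hφ : ContDiff ℝ 2 φ) (v : (Fin d → ℝ) × ℝ) :
    ContDiff ℝ 1 fun p => fderiv ℝ φ p v :=
  (hφ.fderiv_right (m := 1) (by norm_num)).clm_apply contDiff_const

theorem contDiff_det {n : WithTop ℕ∞} {E : Type*} [NormedAddCommGroup E] [NormedSpace ℝ E]
    {M : E → Matrix (Fin d) (Fin d) ℝ} (hM : ∀ i j, ContDiff ℝ n fun p => M p i j) :
    ContDiff ℝ n fun p => (M p).det := by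
  simp only [Matrix.det_apply]
  exact ContDiff.sum fun σ _ => (contDiff_prod fun i _ => hM _ _).const_smul _

theorem contDiff_spaceD (hφ : ContDiff ℝ 2 φ) (i j : Fin d) :
    ContDiff ℝ 1 fun p => spaceD φ p i j :=
  contDiff_pi.1 (contDiff_fderiv_apply hφ _) i

theorem contDiff_adjugate (hφ : ContDiff ℝ 2 φ) (i j : Fin d) :
    ContDiff ℝ 1 fun p => (spaceD φ p).adjugate i j := by
  simp only [Matrix.adjugate_apply]
  refine contDiff_det fun a b => ?_
  rcases eq_or_ne a j with rfl | h
  · simpa using contDiff_const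
  · simpa [Matrix.updateRow_ne h] using contDiff_spaceD hφ a b

theorem hasDerivAt_fderiv_curve (hφ : ContDiff ℝ 2 φ) {c : ℝ → (Fin d → ℝ) × ℝ}
    {u : (Fin d → ℝ) × ℝ} {s : ℝ} (hc : HasDerivAt c u s) (v : (Fin d → ℝ) × ℝ) (i : Fin d) :
    HasDerivAt (fun r => fderiv ℝ φ (c r) v i) (fderiv ℝ (fderiv ℝ φ) (c s) u v i) s := by
  have h1 : HasFDerivAt (fderiv ℝ φ) (fderiv ℝ (fderiv ℝ φ) (c s)) (c s) :=
    ((hφ.fderiv_right (m := 1) (by norm_num)).differentiable (by norm_num) _).hasFDerivAt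
  have h2 := (h1.comp_hasDerivAt s hc).clm_apply (hasDerivAt_const s v)
  simpa using (hasDerivAt_pi.1 h2) i

theorem fderiv_fderiv_symm (hφ : ContDiff ℝ 2 φ) (p u v : (Fin d → ℝ) × ℝ) :
    fderiv ℝ (fderiv ℝ φ) p u v = fderiv ℝ (fderiv ℝ φ) p v u :=
  hφ.contDiffAt.isSymmSndFDerivAt (by simp) u v

/-- Jacobi's formula for `∂J/∂t`, with `∂ₜ∂ₗφₖ` rewritten as `∂ₗŵₖ`. -/
theorem hasDerivAt_jacobian (hφ : ContDiff ℝ 2 φ) (x : Fin d → ℝ) (t : ℝ) :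
    HasDerivAt (fun s => (spaceD φ (x, s)).det)
      (∑ k, ∑ l, fderiv ℝ (fderiv ℝ φ) (x, t) (Pi.single l 1, 0) (0, 1) k *
        (spaceD φ (x, t)).adjugate l k) t := by
  have hc : HasDerivAt (fun s : ℝ => (x, s)) ((0 : Fin d → ℝ), (1 : ℝ)) t :=
    (hasDerivAt_const t x).prodMk (hasDerivAt_id t)
  have h := hasDerivAt_det (M := fun s => spaceD φ (x, s))
    (M' := Matrix.of fun k l => fderiv ℝ (fderiv ℝ φ) (x, t) (Pi.single l 1, 0) (0, 1) k)
    (s := t) (fun i j => by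
      rw [Matrix.of_apply, fderiv_fderiv_symm hφ]
      exact hasDerivAt_fderiv_curve hφ hc _ i)
  simpa only [det_updateRow_eq_sum, Matrix.of_apply] using h

/-- The Piola identity `div (adjugate (Dφ_t) ŵ) = ∑ₖₗ (adjugate Dφ_t)ₗₖ ∂ₗŵₖ`: the columns of
`adjugate (Dφ_t)` are divergence free. -/
theorem vdiv_adjugate (hφ : ContDiff ℝ 2 φ) (x : Fin d → ℝ) (t : ℝ) :
    vdiv (fun y => (spaceD φ (y, t)).adjugate.mulVec (fderiv ℝ φ (y, t) (0, 1))) x =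
      ∑ k, ∑ l, fderiv ℝ (fderiv ℝ φ) (x, t) (Pi.single l 1, 0) (0, 1) k *
        (spaceD φ (x, t)).adjugate l k := by
  set g : (Fin d → ℝ) → (Fin d → ℝ) :=
    fun y => (spaceD φ (y, t)).adjugate.mulVec (fderiv ℝ φ (y, t) (0, 1)) with hg
  have hpair : ContDiff ℝ 1 fun y : Fin d → ℝ => (y, t) := contDiff_id.prodMk contDiff_const
  have hgd : Differentiable ℝ g := by
    refine ContDiff.differentiable (n := 1) (contDiff_pi.2 fun i => ?_) (by norm_num)
    simp only [hg, Matrix.mulVec, dotProduct]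
    exact ContDiff.sum fun j _ => ((contDiff_adjugate hφ i j).comp hpair).mul
      ((contDiff_pi.1 (contDiff_fderiv_apply hφ (0, 1)) j).comp hpair)
  have hline (i : Fin d) : HasDerivAt (fun s : ℝ => x + s • (Pi.single i 1 : Fin d → ℝ))
      (Pi.single i 1) 0 := by
    simpa using ((hasDerivAt_id (0 : ℝ)).smul_const (Pi.single i 1 : Fin d → ℝ)).const_add x
  have hc (i : Fin d) : HasDerivAt (fun s : ℝ => (x + s • (Pi.single i 1 : Fin d → ℝ), t))
      (Pi.single i 1, 0) 0 := (hline i).prodMk (hasDerivAt_const _ _)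
  let H : Fin d → Fin d → Fin d → ℝ := fun k i l =>
    fderiv ℝ (fderiv ℝ φ) (x, t) (Pi.single i 1, 0) (Pi.single l 1, 0) k
  have hH : ∀ k i l, H k i l = H k l i := fun k i l => by
    simp only [H]; rw [fderiv_fderiv_symm hφ]
  let A := spaceD φ (x, t)
  have hadj (i j : Fin d) : HasDerivAt
      (fun s : ℝ => (spaceD φ (x + s • (Pi.single i 1 : Fin d → ℝ), t)).adjugate i j)
      (∑ k, ((A.updateRow j (Pi.single i 1)).updateRow k
        ((Matrix.of fun k => H k i).updateRow j 0 k)).det) 0 := by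
    simp only [Matrix.adjugate_apply]
    have h := hasDerivAt_det (s := 0)
      (M := fun s : ℝ => (spaceD φ (x + s • (Pi.single i 1 : Fin d → ℝ), t)).updateRow j
        (Pi.single i 1))
      (M' := (Matrix.of fun k => H k i).updateRow j 0) (fun a b => by
        rcases eq_or_ne a j with rfl | haj
        · simpa using hasDerivAt_const _ _
        · simp only [Matrix.updateRow_ne haj]
          simpa [H, spaceD] using hasDerivAt_fderiv_curve hφ (hc i) (Pi.single b 1, 0) a)
    simpa [A] using h
  have hentry (i : Fin d) : fderiv ℝ g x (Pi.single i 1) i =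
      ∑ j, ((∑ k, ((A.updateRow j (Pi.single i 1)).updateRow k
        ((Matrix.of fun k => H k i).updateRow j 0 k)).det) * fderiv ℝ φ (x, t) (0, 1) j +
        A.adjugate i j * fderiv ℝ (fderiv ℝ φ) (x, t) (Pi.single i 1, 0) (0, 1) j) := by
    have h0 : HasFDerivAt g (fderiv ℝ g x) (x + (0 : ℝ) • (Pi.single i 1 : Fin d → ℝ)) := by
      simpa using (hgd x).hasFDerivAt
    have h1 := hasDerivAt_pi.1 (h0.comp_hasDerivAt 0 (hline i)) i
    have h2 := HasDerivAt.fun_sum (u := Finset.univ) fun j _ =>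
      (hadj i j).mul (hasDerivAt_fderiv_curve hφ (hc i) (0, 1) j)
    have h3 := h1.unique h2
    simpa [A] using h3
  simp only [vdiv, hentry, Finset.sum_add_distrib]
  have hz : ∑ i, ∑ j, (∑ k, ((A.updateRow j (Pi.single i 1)).updateRow k
      ((Matrix.of fun k => H k i).updateRow j 0 k)).det) * fderiv ℝ φ (x, t) (0, 1) j = 0 := by
    rw [Finset.sum_comm]
    refine Finset.sum_eq_zero fun j _ => ?_
    rw [← Finset.sum_mul, sum_det_updateRow_symm_eq_zero A H hH j, zero_mul]
  rw [hz, zero_add, Finset.sum_comm]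
  simp only [A, mul_comm]

theorem volume_image_eq (hφ : ContDiff ℝ 2 φ) {K : Set (Fin d → ℝ)} (hKm : MeasurableSet K)
    {t : ℝ} (hinj : Set.InjOn (fun x => φ (x, t)) K)
    (hJpos : ∀ x ∈ K, 0 < (Dmat (fun y => φ (y, t)) x).det) :
    (volume ((fun x => φ (x, t)) '' K)).toReal = ∫ x in K, (spaceD φ (x, t)).det := by
  have h := integral_image_eq_integral_abs_det_fderiv_smul volume hKm
    (fun x _ => (hasFDerivAt_slice hφ x t).hasFDerivWithinAt) hinj (fun _ => (1 : ℝ))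
  rw [setIntegral_const, smul_eq_mul, mul_one] at h
  refine Eq.trans h (setIntegral_congr_fun hKm fun x hx => ?_)
  have hdet : ((fderiv ℝ φ (x, t)).comp (ContinuousLinearMap.inl ℝ (Fin d → ℝ) ℝ)).det =
      (spaceD φ (x, t)).det := by
    rw [ContinuousLinearMap.det, ← LinearMap.det_toMatrix']
    congr 1
  have hp := hJpos x hx
  rw [Dmat_eq_spaceD hφ] at hp
  simp only [hdet, smul_eq_mul, mul_one, abs_of_pos hp]

end

/-- **Integral form of the Space Conservation Law:** the rate of change of the volume of
the moving control volume `φ_t(K̂)` equals the integral over `K̂` of the referential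
divergence of `adjugate(Dφ_{t₀}) · ŵ(·,t₀)`. -/
theorem integral_SCL (d : ℕ) (hd : 1 ≤ d)
    (φ : (Fin d → ℝ) × ℝ → (Fin d → ℝ)) (hφ : ContDiff ℝ 2 φ)
    (K : Set (Fin d → ℝ)) (hK : IsCompact K) (hKm : MeasurableSet K)
    (hinj : ∀ t : ℝ, Set.InjOn (fun x => φ (x, t)) K)
    (hJpos : ∀ t : ℝ, ∀ x ∈ K, 0 < (Dmat (fun y => φ (y, t)) x).det)
    (t₀ : ℝ) :
    HasDerivAt (fun t => (volume ((fun x => φ (x, t)) '' K)).toReal)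
      (∫ x in K, vdiv (fun y => (Matrix.adjugate (Dmat (fun z => φ (z, t₀)) y)).mulVec
        (deriv (fun s => φ (y, s)) t₀)) x) t₀ := by
  have hJ : ContDiff ℝ 1 fun p => (spaceD φ p).det := contDiff_det (contDiff_spaceD hφ)
  have hvol : (fun t => (volume ((fun x => φ (x, t)) '' K)).toReal) =
      fun t => ∫ x in K, (spaceD φ (x, t)).det :=
    funext fun t => volume_image_eq hφ hKm (hinj t) (hJpos t)
  have hJ' : Continuous fun p => fderiv ℝ (fun p => (spaceD φ p).det) p (0, 1) :=
    (hJ.continuous_fderiv (by norm_num)).clm_apply continuous_const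
  have hdiff (x : Fin d → ℝ) (t : ℝ) : HasDerivAt (fun s => (spaceD φ (x, s)).det)
      (fderiv ℝ (fun p => (spaceD φ p).det) (x, t) (0, 1)) t :=
    (hJ.differentiable (by norm_num) (x, t)).hasFDerivAt.comp_hasDerivAt t
      ((hasDerivAt_const t x).prodMk (hasDerivAt_id t))
  obtain ⟨C, hC⟩ := (hK.prod (isCompact_closedBall t₀ 1)).exists_bound_of_continuousOn
    hJ'.continuousOn
  have hslice (t : ℝ) : Continuous fun x : Fin d → ℝ => (x, t) := by fun_prop
  have main := (hasDerivAt_integral_of_dominated_loc_of_deriv_le (μ := volume.restrict K)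
    (F := fun t x => (spaceD φ (x, t)).det)
    (F' := fun t x => fderiv ℝ (fun p => (spaceD φ p).det) (x, t) (0, 1))
    (bound := fun _ => C) (x₀ := t₀) (Metric.closedBall_mem_nhds t₀ one_pos)
    (.of_forall fun t => (hJ.continuous.comp (hslice t)).aestronglyMeasurable)
    ((hJ.continuous.comp (hslice t₀)).continuousOn.integrableOn_compact hK)
    (hJ'.comp (hslice t₀)).aestronglyMeasurable
    ((ae_restrict_mem hKm).mono fun x hx t ht => hC (x, t) ⟨hx, ht⟩)
    (continuousOn_const.integrableOn_compact hK)
    (.of_forall fun x t _ => hdiff x t)).2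
  rw [hvol]
  refine main.congr_deriv (integral_congr_ae (.of_forall fun x => ?_))
  simp only [Dmat_eq_spaceD hφ, deriv_time_eq hφ]
  rw [vdiv_adjugate hφ, (hdiff x t₀).unique (hasDerivAt_jacobian hφ x t₀)]
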